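/- arXiv:1611.10315 — 2 statements merged into one kernel-verified Lean document; each statement's English description precedes it below -/
import Mathlib

section
/- For every integer h ≥ 3 there exist δ₀ = δ₀(h) > 0 and β = β(h) > 0 such that for every δ ∈ (0, δ₀) there is a graph R with the following properties: (1) V(R) = V₁ ∪ … ∪ V_h where each V_i is an independent set of R; (2) |V(R)| ≥ (1/δ)^{β·log(1/δ)}; (3) the edge set of R is the union of the edge sets of at least δ·|V(R)|² pairwise edge-disjoint cliques of size h; (4) for every 3 ≤ t ≤ h and every sequence 1 ≤ i₁ < i₂ < … < i_t ≤ h, R contains at most |V(R)|² (not necessarily induced) cycles of the form v_{i₁}v_{i₂}…v_{i_t}v_{i₁} with v_{i_j} ∈ V_{i_j} for every j. -/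
open scoped Classical
open Finset

noncomputable section

/-- Number of unordered vertex pairs on which two graphs on the same vertex set differ. -/
def editDist {n : ℕ} (G H : SimpleGraph (Fin n)) : ℕ :=
  Set.ncard {e : Sym2 (Fin n) | (e ∈ G.edgeSet ∧ e ∉ H.edgeSet) ∨ (e ∉ G.edgeSet ∧ e ∈ H.edgeSet)}

/-- `G` is `ε`-far from satisfying the graph property `P`. -/
def Far (P : ∀ n : ℕ, Set (SimpleGraph (Fin n))) {n : ℕ} (G : SimpleGraph (Fin n)) (ε : ℝ) : Prop :=
  ∀ H : SimpleGraph (Fin n), H ∈ P n → ε * (n : ℝ) ^ 2 ≤ (editDist G H : ℝ)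

/-- The subgraph induced by a vertex subset `Q` of size `m`, as a graph on `Fin m`. -/
def inducedOn {n : ℕ} (G : SimpleGraph (Fin n)) {m : ℕ} (Q : Finset (Fin n))
    (h : Q.card = m) : SimpleGraph (Fin m) :=
  G.comap fun i => ((Q.orderIsoOfFin h) i : Fin n)

/-- A graph property is easily testable if for some constant `c > 0`, for every `ε ∈ (0,1/2)`
and every graph on at least `ε ^ (-c)` vertices which is `ε`-far from `P`, at least a
`2/3`-fraction of the `⌈ε ^ (-c)⌉`-element vertex subsets induce a subgraph not satisfying `P`. -/
def EasilyTestable (P : ∀ n : ℕ, Set (SimpleGraph (Fin n))) : Prop :=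
  ∃ c : ℝ, 0 < c ∧ ∀ ε : ℝ, 0 < ε → ε < 1 / 2 → ∀ n : ℕ, ∀ G : SimpleGraph (Fin n),
    ε ^ (-c) ≤ (n : ℝ) → Far P G ε →
    (2 / 3 : ℝ) * (((Finset.univ : Finset (Fin n)).powersetCard ⌈ε ^ (-c)⌉₊).card : ℝ) ≤
      ((((Finset.univ : Finset (Fin n)).powersetCard ⌈ε ^ (-c)⌉₊).filter
        fun Q => ∃ h : Q.card = ⌈ε ^ (-c)⌉₊, inducedOn G Q h ∉ P ⌈ε ^ (-c)⌉₊).card : ℝ)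

/-- The property of being induced `𝓕`-free. -/
def InducedFree (𝓕 : Set (Σ k : ℕ, SimpleGraph (Fin k))) : ∀ n : ℕ, Set (SimpleGraph (Fin n)) :=
  fun n => {G | ∀ p ∈ 𝓕, IsEmpty (p.2 ↪g G)}

/-- A graph is bipartite: its vertex set can be partitioned into two independent sets. -/
def IsBipGraph {V : Type*} (H : SimpleGraph V) : Prop :=
  ∃ A : Set V, (∀ u ∈ A, ∀ v ∈ A, ¬ H.Adj u v) ∧ (∀ u ∉ A, ∀ v ∉ A, ¬ H.Adj u v)

/-- A graph is co-bipartite: its vertex set can be partitioned into two cliques. -/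
def IsCoBipGraph {V : Type*} (H : SimpleGraph V) : Prop :=
  ∃ A : Set V, (∀ u ∈ A, ∀ v ∈ A, u ≠ v → H.Adj u v) ∧ (∀ u ∉ A, ∀ v ∉ A, u ≠ v → H.Adj u v)

/-- A graph is split: its vertex set can be partitioned into a clique and an independent set. -/
def IsSplitGraph {V : Type*} (H : SimpleGraph V) : Prop :=
  ∃ A : Set V, (∀ u ∈ A, ∀ v ∈ A, u ≠ v → H.Adj u v) ∧ (∀ u ∉ A, ∀ v ∉ A, ¬ H.Adj u v)

/-!
By strict convexity, no point of a sphere is a nontrivial average of points of the sphere. A large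
set of integer points on a sphere, reduced modulo a number so large that short sums do not wrap
around, is therefore a dense subset `S` of a finite abelian group `G`, no element of which is a
nontrivial average of at most `h` others. With coordinates below `h ^ d` in dimension `d`, the group
has `h ^ (d + d ^ 2)` elements and the density of `S` is at least `h ^ (-3 * d) / d`, which is at
least `δ * h ^ 2` for `d = ⌊log_h (1 / δ) / 5⌋`.

The vertices of `R` are the pairs `(i, g)` with `i < h` and `g ∈ G`, and the cliques are the
progressions `(i, z + i s)` with `z ∈ G` and `s ∈ S`. Around a cycle which visits the parts in
increasing order, the difference used by the closing edge is an average of the differences used by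
the other edges, so all of these are equal and the cycle stays within a single progression. Such a
cycle is determined by any two of its vertices.
-/

section AverageFree

/-- A set `S` is `n`-average-free if no element of `S` is an average of at most `n` elements of `S`,
counted with multiplicity, except in the trivial way where all of them are equal to it. -/
def IsAverageFree {G : Type*} [AddCommMonoid G] (n : ℕ) (S : Set G) : Prop :=
  ∀ ⦃m : Multiset G⦄ ⦃t : G⦄, m.card ≤ n → (∀ s ∈ m, s ∈ S) → t ∈ S → m.sum = m.card • t →
    ∀ s ∈ m, s = t

theorem IsAverageFree.eq_of_nsmul_eq_nsmul {G : Type*} [AddCommMonoid G] {n a : ℕ} {S : Set G}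
    (hS : IsAverageFree n S) (ha : a ≠ 0) (han : a ≤ n) {s t : G} (hs : s ∈ S) (ht : t ∈ S)
    (hst : a • s = a • t) : s = t :=
  hS (m := Multiset.replicate a s) (by simpa using han)
    (fun _ hu => Multiset.eq_of_mem_replicate hu ▸ hs) ht (by simpa using hst) s
    (Multiset.mem_replicate.2 ⟨ha, rfl⟩)

theorem IsAverageFree.of_isAddFreimanHom {G H : Type*} [AddCommMonoid G] [AddCancelCommMonoid H]
    {n : ℕ} {S : Set G} {T : Set H} {f : G → H} (hT : IsAverageFree n T)
    (hf : IsAddFreimanHom n S T f) (hinj : Set.InjOn f S) : IsAverageFree n S := by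
  intro m t hmn hmS ht hsum s hs
  have hsum' : (m.map f).sum = (m.map f).card • f t := by
    have := (hf.mono hmn).map_sum_eq_map_sum (fun x hx => hmS x hx)
      (t := Multiset.replicate m.card t) (fun x hx => Multiset.eq_of_mem_replicate hx ▸ ht) rfl
      (Multiset.card_replicate _ _) (by simpa using hsum)
    simpa using this
  have hmT : ∀ y ∈ m.map f, y ∈ T :=
    Multiset.forall_mem_map_iff.2 fun x hx => hf.mapsTo (hmS x hx)
  exact hinj (hmS s hs) ht <|
    hT (by simpa using hmn) hmT (hf.mapsTo ht) hsum' (f s) (Multiset.mem_map_of_mem f hs)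

theorem IsAverageFree.of_isAddFreimanIso {G H : Type*} [AddCancelCommMonoid G] [AddCommMonoid H]
    {n : ℕ} {S : Set G} {T : Set H} {f : G → H} (hS : IsAverageFree n S)
    (hf : IsAddFreimanIso n S T f) : IsAverageFree n T :=
  hS.of_isAddFreimanHom hf.invFunOn.isAddFreimanHom hf.invFunOn.bijOn.injOn

-- Equality must hold in the triangle inequality `‖n • t‖ ≤ ‖s‖ + ‖sum of the others‖`.
theorem isAverageFree_sphere {E : Type*} [NormedAddCommGroup E] [NormedSpace ℝ E]
    [StrictConvexSpace ℝ E] (n : ℕ) (r : ℝ) : IsAverageFree n (Metric.sphere (0 : E) r) := by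
  intro m t _ hm ht hsum s hs
  simp only [mem_sphere_zero_iff_norm] at hm ht
  obtain ⟨m', rfl⟩ := Multiset.exists_cons_of_mem hs
  simp only [Multiset.sum_cons, Multiset.card_cons] at hsum
  have hrest : ‖m'.sum‖ ≤ m'.card * r := by
    simpa using (norm_multiset_sum_le m').trans <| Multiset.sum_le_card_nsmul _ r <|
      Multiset.forall_mem_map_iff.2 fun x hx => (hm x (Multiset.mem_cons_of_mem hx)).le
  have hray : SameRay ℝ s (s + m'.sum) := by
    refine (SameRay.refl s).add_right (sameRay_iff_norm_add.2 ((norm_add_le _ _).antisymm ?_))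
    rw [hsum, RCLike.norm_nsmul ℝ, ht, hm s hs, nsmul_eq_mul]
    push_cast
    linarith
  rw [hsum, ← Nat.cast_smul_eq_nsmul ℝ] at hray
  have hcard : (0 : ℝ) < (m'.card + 1 : ℕ) := by positivity
  have hst : SameRay ℝ s t := by
    simpa only [inv_smul_smul₀ hcard.ne'] using hray.pos_smul_right (inv_pos.2 hcard)
  exact hst.eq_of_norm_eq ((hm s hs).trans ht.symm)

/-- Coordinatewise reduction modulo `q`. -/
def reduceMod (d q : ℕ) : (Fin d → ℕ) →+ (Fin d → ZMod q) :=
  (Nat.castAddMonoidHom (ZMod q)).compLeft (Fin d)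

theorem reduceMod_injOn (d q : ℕ) : Set.InjOn (reduceMod d q) (Behrend.box d q) := by
  intro x hx y hy hxy
  rw [Finset.mem_coe, Behrend.mem_box] at hx hy
  funext c
  have hc : (x c : ZMod q) = y c := congrFun hxy c
  exact ((ZMod.natCast_eq_natCast_iff _ _ _).1 hc).eq_of_lt_of_lt (hx c) (hy c)

theorem multiset_sum_mem_box {d k : ℕ} {m : Multiset (Fin d → ℕ)} (hm : m ≠ 0)
    (hmk : ∀ x ∈ m, x ∈ Behrend.box d k) : m.sum ∈ Behrend.box d (m.card * k) := by
  refine Behrend.mem_box.2 fun c => ?_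
  rw [Pi.multiset_sum_apply]
  simpa using Multiset.sum_lt_sum_of_nonempty (f := fun x : Fin d → ℕ => x c) (g := fun _ => k) hm
    fun x hx => Behrend.mem_box.1 (hmk x hx) c

-- Sums of `n` vectors of the box have entries less than `n * k`, so they do not wrap around.
theorem isAddFreimanIso_reduceMod {d k n : ℕ} (hn : n ≠ 0) :
    IsAddFreimanIso n (Behrend.box d k : Set (Fin d → ℕ))
      (reduceMod d (n * k) '' Behrend.box d k) (reduceMod d (n * k)) where
  bijOn := by
    refine Set.InjOn.bijOn_image ((reduceMod_injOn d (n * k)).mono fun x hx => ?_)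
    rw [Finset.mem_coe, Behrend.mem_box] at hx ⊢
    exact fun c => (hx c).trans_le (Nat.le_mul_of_pos_left k (Nat.pos_of_ne_zero hn))
  map_sum_eq_map_sum := by
    intro a b ha hb hac hbc
    have sum_mem : ∀ m : Multiset (Fin d → ℕ), (∀ x ∈ m, x ∈ Behrend.box d k) → m.card = n →
        m.sum ∈ Behrend.box d (n * k) := by
      rintro m hm rfl
      exact multiset_sum_mem_box (by simpa using hn) hm
    rw [← map_multiset_sum, ← map_multiset_sum]
    exact (reduceMod_injOn d (n * k)).eq_iff (sum_mem a ha hac) (sum_mem b hb hbc)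

theorem isAverageFree_behrendSphere (n d k r : ℕ) :
    IsAverageFree n (Behrend.sphere d k r : Set (Fin d → ℕ)) := by
  let f : (Fin d → ℕ) →+ EuclideanSpace ℝ (Fin d) :=
    { toFun := fun x => WithLp.toLp 2 ((↑) ∘ x)
      map_zero' := PiLp.ext fun _ => Nat.cast_zero
      map_add' := fun _ _ => PiLp.ext fun _ => Nat.cast_add _ _ }
  exact (isAverageFree_sphere n (√r)).of_isAddFreimanHom
    (AddHomClass.isAddFreimanHom f Behrend.sphere_subset_preimage_metric_sphere)
    ((WithLp.toLp_injective 2).comp Nat.cast_injective.comp_left).injOn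

theorem exists_isAverageFree_pi_zmod {n : ℕ} (hn : n ≠ 0) (d k : ℕ) :
    ∃ S : Finset (Fin d → ZMod (n * k)), IsAverageFree n (S : Set (Fin d → ZMod (n * k))) ∧
      (k : ℝ) ^ d / (d * (k : ℝ) ^ 2) ≤ S.card := by
  obtain ⟨r, hr⟩ := Behrend.exists_large_sphere d k
  have hiso : IsAddFreimanIso n (Behrend.sphere d k r : Set (Fin d → ℕ))
      (reduceMod d (n * k) '' Behrend.sphere d k r) (reduceMod d (n * k)) :=
    (isAddFreimanIso_reduceMod hn).subset (Finset.coe_subset.2 Behrend.sphere_subset_box)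
      (((isAddFreimanIso_reduceMod hn).bijOn.injOn.mono
        (Finset.coe_subset.2 Behrend.sphere_subset_box)).bijOn_image)
  refine ⟨(Behrend.sphere d k r).image (reduceMod d (n * k)), ?_, ?_⟩
  · rw [Finset.coe_image]
    exact (isAverageFree_behrendSphere n d k r).of_isAddFreimanIso hiso
  · rw [Finset.card_image_of_injOn hiso.bijOn.injOn]
    exact_mod_cast hr

end AverageFree

section ProgressionGraph

variable {V G : Type*} {h : ℕ}

/-- The `i`-th of the `h` parts of the vertex set, numbered from `0`. -/
def part [Fintype V] (e : V ≃ Fin h × G) (i : Fin h) : Finset V :=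
  Finset.univ.filter fun v => (e v).1 = i

theorem mem_part [Fintype V] {e : V ≃ Fin h × G} {i : Fin h} {v : V} :
    v ∈ part e i ↔ (e v).1 = i := by
  simp only [part, Finset.mem_filter, Finset.mem_univ, true_and]

variable [AddCommGroup G]

/-- The arithmetic progression `z, z + s, z + 2s, …`, with one term in each of the `h` parts
`{i} × G` of the vertex set. The vertices have an arbitrary type `V` coordinatised by `e`, so that
`V` can be taken to be `Fin N`. -/
def progression (e : V ≃ Fin h × G) (z s : G) : Finset V :=
  Finset.univ.image fun i : Fin h => e.symm (i, z + (i : ℕ) • s)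

theorem mem_progression {e : V ≃ Fin h × G} {z s : G} {v : V} :
    v ∈ progression e z s ↔ (e v).2 = z + ((e v).1 : ℕ) • s := by
  simp only [progression, Finset.mem_image, Finset.mem_univ, true_and]
  constructor
  · rintro ⟨i, rfl⟩
    simp only [Equiv.apply_symm_apply]
  · exact fun hv => ⟨(e v).1, by rw [← hv, Prod.mk.eta, Equiv.symm_apply_apply]⟩

theorem card_progression (e : V ≃ Fin h × G) (z s : G) : (progression e z s).card = h := by
  have hinj : Function.Injective fun i : Fin h => e.symm (i, z + (i : ℕ) • s) :=
    fun _ _ hij => (Prod.ext_iff.1 (e.symm.injective hij)).1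
  rw [progression, Finset.card_image_of_injective _ hinj, Finset.card_univ, Fintype.card_fin]

theorem eq_of_mem_progression_of_fst_eq {e : V ≃ Fin h × G} {z s : G} {u v : V}
    (hu : u ∈ progression e z s) (hv : v ∈ progression e z s) (huv : (e u).1 = (e v).1) :
    u = v := by
  rw [mem_progression] at hu hv
  exact e.injective (Prod.ext huv (by rw [hu, hv, huv]))

theorem snd_eq_add_nsmul_of_mem_progression {e : V ≃ Fin h × G} {z s : G} {u v : V}
    (hu : u ∈ progression e z s) (hv : v ∈ progression e z s) (huv : (e u).1 ≤ (e v).1) :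
    (e v).2 = (e u).2 + ((e v).1 - (e u).1 : ℕ) • s := by
  rw [mem_progression] at hu hv
  rw [hu, hv, add_assoc, ← add_nsmul, Nat.add_sub_cancel' huv]

theorem start_eq_of_mem_progression {e : V ≃ Fin h × G} {z z' s : G} {v : V}
    (hv : v ∈ progression e z s) (hv' : v ∈ progression e z' s) : z = z' :=
  add_right_cancel ((mem_progression.1 hv).symm.trans (mem_progression.1 hv'))

theorem start_eq_and_difference_eq_of_mem_progression {e : V ≃ Fin h × G} {S : Set G}
    (hS : IsAverageFree h S) {z z' s s' : G} (hs : s ∈ S) (hs' : s' ∈ S) {u v : V} (huv : u ≠ v)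
    (hu : u ∈ progression e z s) (hv : v ∈ progression e z s)
    (hu' : u ∈ progression e z' s') (hv' : v ∈ progression e z' s') : z = z' ∧ s = s' := by
  wlog hlt : (e u).1 < (e v).1 generalizing u v
  · refine this huv.symm hv hu hv' hu' (lt_of_le_of_ne (not_lt.1 hlt) fun heq => huv ?_)
    exact eq_of_mem_progression_of_fst_eq hu hv heq.symm
  have hsmul : ((e v).1 - (e u).1 : ℕ) • s = ((e v).1 - (e u).1 : ℕ) • s' :=
    add_left_cancel <| (snd_eq_add_nsmul_of_mem_progression hu hv hlt.le).symm.trans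
      (snd_eq_add_nsmul_of_mem_progression hu' hv' hlt.le)
  obtain rfl : s = s' := hS.eq_of_nsmul_eq_nsmul (by lia) (by lia) hs hs' hsmul
  exact ⟨start_eq_of_mem_progression hu hu', rfl⟩

/-- The graph in which two distinct vertices are adjacent if they lie on a common progression with
difference in `S`. -/
def progressionGraph (e : V ≃ Fin h × G) (S : Set G) : SimpleGraph V where
  Adj u v := u ≠ v ∧ ∃ z, ∃ s ∈ S, u ∈ progression e z s ∧ v ∈ progression e z s
  symm := ⟨fun _ _ ⟨huv, z, s, hs, hu, hv⟩ => ⟨huv.symm, z, s, hs, hv, hu⟩⟩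
  loopless := ⟨fun _ hv => hv.1 rfl⟩

theorem not_progressionGraph_adj_of_fst_eq {e : V ≃ Fin h × G} {S : Set G} {u v : V}
    (huv : (e u).1 = (e v).1) : ¬ (progressionGraph e S).Adj u v :=
  fun ⟨hne, _, _, _, hu, hv⟩ => hne (eq_of_mem_progression_of_fst_eq hu hv huv)

theorem progressionGraph_isNClique (e : V ≃ Fin h × G) {S : Set G} (z : G) {s : G} (hs : s ∈ S) :
    (progressionGraph e S).IsNClique h (progression e z s) :=
  ⟨fun _ hu _ hv huv => ⟨huv, z, s, hs, hu, hv⟩, card_progression e z s⟩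

section Cliques

variable [Fintype G]

/-- The progressions with difference in `S`: the cliques that make up `progressionGraph e S`. -/
def progressions (e : V ≃ Fin h × G) (S : Finset G) : Finset (Finset V) :=
  (Finset.univ ×ˢ S).image fun p => progression e p.1 p.2

theorem mem_progressions {e : V ≃ Fin h × G} {S : Finset G} {K : Finset V} :
    K ∈ progressions e S ↔ ∃ z, ∃ s ∈ S, progression e z s = K := by
  simp [progressions]

theorem card_progressions (e : V ≃ Fin h × G) {S : Finset G} (hS : IsAverageFree h (S : Set G))
    (hh : 2 ≤ h) : (progressions e S).card = Fintype.card G * S.card := by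
  rw [progressions, Finset.card_image_of_injOn, Finset.card_product, Finset.card_univ]
  rintro ⟨z, s⟩ hp ⟨z', s'⟩ hp' (heq : progression e z s = progression e z' s')
  simp only [Finset.coe_product, Set.mem_prod, Finset.mem_coe, Finset.mem_univ, true_and] at hp hp'
  obtain ⟨u, hu, v, hv, huv⟩ := Finset.one_lt_card.1
    (show 1 < (progression e z s).card by rw [card_progression]; exact hh)
  obtain ⟨rfl, rfl⟩ := start_eq_and_difference_eq_of_mem_progression hS hp hp' huv hu hv
    (heq ▸ hu) (heq ▸ hv)
  rfl

theorem card_inter_le_one_of_mem_progressions [DecidableEq V] {e : V ≃ Fin h × G} {S : Finset G}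
    (hS : IsAverageFree h (S : Set G)) {K K' : Finset V} (hK : K ∈ progressions e S)
    (hK' : K' ∈ progressions e S) (hne : K ≠ K') : (K ∩ K').card ≤ 1 := by
  obtain ⟨z, s, hs, rfl⟩ := mem_progressions.1 hK
  obtain ⟨z', s', hs', rfl⟩ := mem_progressions.1 hK'
  refine Finset.card_le_one.2 fun u hu v hv => by_contra fun huv => hne ?_
  rw [Finset.mem_inter] at hu hv
  obtain ⟨rfl, rfl⟩ :=
    start_eq_and_difference_eq_of_mem_progression hS hs hs' huv hu.1 hv.1 hu.2 hv.2
  rfl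

theorem exists_mem_progressions_of_adj {e : V ≃ Fin h × G} {S : Finset G} {u v : V}
    (huv : (progressionGraph e S).Adj u v) : ∃ K ∈ progressions e S, u ∈ K ∧ v ∈ K :=
  let ⟨_, z, s, hs, hu, hv⟩ := huv
  ⟨progression e z s, mem_progressions.2 ⟨z, s, hs, rfl⟩, hu, hv⟩

end Cliques

theorem apply_last_eq_apply_zero_add_sum {M : Type*} [AddCommMonoid M] {n : ℕ} {f : Fin (n + 1) → M}
    {g : Fin n → M} (hfg : ∀ j, f j.succ = f j.castSucc + g j) :
    f (Fin.last n) = f 0 + ∑ j, g j := by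
  induction n with
  | zero => simp
  | succ n ih =>
    rw [← Fin.succ_last, hfg, Fin.sum_univ_castSucc, ← add_assoc,
      ih (f := fun j => f j.castSucc) fun j => hfg j.castSucc]
    rfl

theorem difference_eq_of_closed_path {e : V ≃ Fin h × G} {S : Set G} (hS : IsAverageFree h S)
    {n : ℕ} {v : Fin (n + 1) → V} (hv : StrictMono fun j => (e (v j)).1)
    {z s : Fin n → G} {z' s' : G}
    (hs : ∀ j, s j ∈ S) (hs' : s' ∈ S)
    (hstep : ∀ j, v j.castSucc ∈ progression e (z j) (s j) ∧ v j.succ ∈ progression e (z j) (s j))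
    (hlast : v (Fin.last n) ∈ progression e z' s') (hzero : v 0 ∈ progression e z' s') (j : Fin n) :
    s j = s' := by
  let a : Fin n → ℕ := fun j => (e (v j.succ)).1 - (e (v j.castSucc)).1
  let m : Multiset G := ∑ j, Multiset.replicate (a j) (s j)
  have hlt : ∀ j : Fin n, (e (v j.castSucc)).1 < (e (v j.succ)).1 := fun j =>
    hv Fin.castSucc_lt_succ
  have hm : ∀ x ∈ m, ∃ j, s j = x := by
    intro x hx
    obtain ⟨j, -, hj⟩ := Multiset.mem_sum.1 hx
    exact ⟨j, (Multiset.eq_of_mem_replicate hj).symm⟩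
  have hcard : ((e (v (Fin.last n))).1 : ℕ) = (e (v 0)).1 + m.card := by
    rw [apply_last_eq_apply_zero_add_sum (f := fun j => ((e (v j)).1 : ℕ)) (g := a) fun j => by
      have := hlt j; simp only [a]; lia]
    simp [m]
  have hsum : (e (v (Fin.last n))).2 = (e (v 0)).2 + m.sum := by
    rw [apply_last_eq_apply_zero_add_sum (f := fun j => (e (v j)).2)
      (g := fun j => a j • s j) fun j =>
        snd_eq_add_nsmul_of_mem_progression (hstep j).1 (hstep j).2 (hlt j).le]
    simp [m, Multiset.sum_sum]
  have hclose : m.sum = m.card • s' := by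
    have := snd_eq_add_nsmul_of_mem_progression hzero hlast (hv.monotone (Fin.zero_le _))
    rw [hsum, hcard, Nat.add_sub_cancel_left] at this
    exact add_left_cancel this
  refine hS (by lia) (fun x hx => ?_) hs' hclose (s j) ?_
  · obtain ⟨i, rfl⟩ := hm x hx
    exact hs i
  · exact Multiset.mem_sum.2 ⟨j, Finset.mem_univ j,
      Multiset.mem_replicate.2 ⟨Nat.sub_ne_zero_of_lt (hlt j), rfl⟩⟩

theorem exists_progression_of_cycle {e : V ≃ Fin h × G} {S : Set G} (hS : IsAverageFree h S)
    {n : ℕ} {v : Fin (n + 1) → V} (hv : StrictMono fun j => (e (v j)).1)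
    (hstep : ∀ j : Fin n, (progressionGraph e S).Adj (v j.castSucc) (v j.succ))
    (hclose : (progressionGraph e S).Adj (v (Fin.last n)) (v 0)) :
    ∃ z, ∃ s ∈ S, ∀ j, v j ∈ progression e z s := by
  choose _ z s hs hstep using hstep
  obtain ⟨-, z', s', hs', hlast, hzero⟩ := hclose
  have hss' := difference_eq_of_closed_path hS hv hs hs' hstep hlast hzero
  refine ⟨z', s', hs', Fin.induction hzero fun j hj => ?_⟩
  obtain ⟨hj₁, hj₂⟩ := hss' j ▸ hstep j
  exact start_eq_of_mem_progression hj₁ hj ▸ hj₂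

theorem ncard_cycles_le [Fintype V] (e : V ≃ Fin h × G) {S : Set G} (hS : IsAverageFree h S)
    {t : ℕ} (ht : 2 ≤ t) {idx : Fin t → Fin h} (hidx : StrictMono idx) :
    Set.ncard {v : Fin t → V | Function.Injective v ∧ (∀ j, v j ∈ part e (idx j)) ∧
      ∀ j : Fin t, (progressionGraph e S).Adj (v j) (v ⟨(j.1 + 1) % t, Nat.mod_lt _ (by lia)⟩)} ≤
      Fintype.card V ^ 2 := by
  obtain ⟨n, rfl⟩ : ∃ n, t = n + 2 := Nat.exists_eq_add_of_le' ht
  have exists_progression : ∀ v : Fin (n + 2) → V, (∀ j, (e (v j)).1 = idx j) →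
      (∀ j : Fin (n + 2), (progressionGraph e S).Adj (v j)
        (v ⟨(j.1 + 1) % (n + 2), Nat.mod_lt _ (by lia)⟩)) →
      ∃ z, ∃ s ∈ S, ∀ j, v j ∈ progression e z s := by
    intro v hpart hadj
    refine exists_progression_of_cycle hS (by simpa only [hpart] using hidx) (fun j => ?_) ?_
    · convert hadj j.castSucc using 2
      exact Fin.ext (Nat.mod_eq_of_lt (Nat.succ_lt_succ j.2)).symm
    · convert hadj (Fin.last (n + 1)) using 2
      exact Fin.ext (by simp)
  rw [sq, ← Fintype.card_prod, ← Nat.card_eq_fintype_card, ← Set.ncard_univ]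
  refine Set.ncard_le_ncard_of_injOn (fun v => (v 0, v 1)) (fun _ _ => Set.mem_univ _) ?_
  rintro v ⟨hinj, hv, hvadj⟩ w ⟨-, hw, hwadj⟩ hvw
  obtain ⟨h0, h1⟩ := Prod.ext_iff.1 hvw
  simp only [mem_part] at hv hw h0 h1
  obtain ⟨z, s, hs, hvzs⟩ := exists_progression v hv hvadj
  obtain ⟨z', s', hs', hwzs⟩ := exists_progression w hw hwadj
  obtain ⟨rfl, rfl⟩ := start_eq_and_difference_eq_of_mem_progression hS hs hs'
    (hinj.ne Fin.zero_ne_one) (hvzs 0) (hvzs 1) (h0 ▸ hwzs 0) (h1 ▸ hwzs 1)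
  exact funext fun j =>
    eq_of_mem_progression_of_fst_eq (hvzs j) (hwzs j) ((hv j).trans (hw j).symm)

end ProgressionGraph

section Parameters

theorem exists_nat_pow_le_and_rpow_log_le {b x : ℝ} (hb : 1 < b) (hx : b ^ 10 ≤ x) :
    ∃ d : ℕ, 2 ≤ d ∧ b ^ (5 * d) ≤ x ∧ x ^ (1 / (100 * Real.log b) * Real.log x) ≤ b ^ d ^ 2 := by
  have hx₀ : 0 < x := by linarith [pow_pos (zero_lt_one.trans hb) 10]
  have hlogb : 0 < Real.log b := Real.log_pos hb
  obtain ⟨ℓ, hℓ⟩ : ∃ ℓ, Real.logb b x = ℓ := ⟨_, rfl⟩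
  have hℓ10 : 10 ≤ ℓ := by
    rw [← hℓ, Real.le_logb_iff_rpow_le hb hx₀]
    exact_mod_cast hx
  have hlog : Real.log x = ℓ * Real.log b := by
    rw [← hℓ, Real.logb, div_mul_cancel₀ _ hlogb.ne']
  have hd_le : (⌊ℓ / 5⌋₊ : ℝ) ≤ ℓ / 5 := Nat.floor_le (by linarith)
  have hd_ge : ℓ / 10 ≤ (⌊ℓ / 5⌋₊ : ℝ) := by linarith [Nat.lt_floor_add_one (ℓ / 5)]
  refine ⟨⌊ℓ / 5⌋₊, Nat.le_floor (by norm_num; linarith), ?_, ?_⟩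
  · rw [← Real.rpow_natCast, ← Real.le_logb_iff_rpow_le hb hx₀, hℓ]
    push_cast
    linarith
  · calc x ^ (1 / (100 * Real.log b) * Real.log x)
        = b ^ ((ℓ / 10) ^ 2) := by
          have hxb : b ^ ℓ = x := hℓ ▸ Real.rpow_logb (zero_lt_one.trans hb) hb.ne' hx₀
          rw [hlog, ← hxb, ← Real.rpow_mul (zero_lt_one.trans hb).le]
          congr 1
          field_simp
          norm_num
      _ ≤ b ^ ((⌊ℓ / 5⌋₊ : ℝ) ^ 2) := by gcongr; exact hb.le
      _ = b ^ ⌊ℓ / 5⌋₊ ^ 2 := by rw [← Nat.cast_pow, Real.rpow_natCast]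

theorem exists_dense_isAverageFree {h : ℕ} (hh : 2 ≤ h) {δ : ℝ} (hδ : 0 < δ)
    (hδ₀ : δ ≤ (1 / h) ^ 10) :
    ∃ (G : Type) (_ : AddCommGroup G) (_ : Fintype G) (S : Finset G),
      IsAverageFree h (S : Set G) ∧
      (1 / δ) ^ (1 / (100 * Real.log h) * Real.log (1 / δ)) ≤ (Fintype.card G : ℝ) ∧
      δ * h ^ 2 * Fintype.card G ≤ (S.card : ℝ) := by
  have hh₁ : (1 : ℝ) < h := by exact_mod_cast hh
  obtain ⟨d, hd, hdδ, hδd⟩ := exists_nat_pow_le_and_rpow_log_le hh₁ (x := 1 / δ) <| by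
    rwa [le_one_div (by positivity) hδ, ← one_div_pow]
  obtain ⟨S, hS, hScard⟩ := exists_isAverageFree_pi_zmod (by lia : h ≠ 0) d (h ^ d)
  have : NeZero (h * h ^ d) := ⟨by positivity⟩
  have hG : (Fintype.card (Fin d → ZMod (h * h ^ d)) : ℝ) = h ^ d * h ^ d ^ 2 := by
    simp only [Fintype.card_pi, ZMod.card, Finset.prod_const, Finset.card_univ, Fintype.card_fin]
    push_cast
    ring
  refine ⟨_, inferInstance, inferInstance, S, hS, ?_, ?_⟩
  · rw [hG]
    exact hδd.trans (le_mul_of_one_le_left (by positivity) (one_le_pow₀ hh₁.le))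
  · have hdh : (d : ℝ) ≤ h ^ d := by exact_mod_cast (Nat.lt_pow_self hh).le
    refine le_trans ?_ hScard
    rw [hG, le_div_iff₀ (by positivity)]
    push_cast
    calc δ * h ^ 2 * (h ^ d * h ^ d ^ 2) * (d * ((h : ℝ) ^ d) ^ 2)
        ≤ δ * h ^ d * (h ^ d * h ^ d ^ 2) * (h ^ d * ((h : ℝ) ^ d) ^ 2) := by
          gcongr; exact hh₁.le
      _ = δ * h ^ (5 * d) * ((h : ℝ) ^ d) ^ d := by ring
      _ ≤ 1 * ((h : ℝ) ^ d) ^ d := by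
          gcongr
          rwa [mul_comm, ← le_div_iff₀ hδ]
      _ = ((h : ℝ) ^ d) ^ d := one_mul _

end Parameters

/-- the Ruzsa–Szemerédi-type construction, Lemma 3.3 of the paper. -/
theorem exists_RS_construction (h : ℕ) (hh : 3 ≤ h) :
    ∃ δ₀ β : ℝ, 0 < δ₀ ∧ 0 < β ∧ ∀ δ : ℝ, 0 < δ → δ < δ₀ →
      ∃ (N : ℕ) (R : SimpleGraph (Fin N)) (V : Fin h → Finset (Fin N)),
        -- (1) V₁ ∪ … ∪ V_h is a partition into independent sets
        ((∀ i j : Fin h, i ≠ j → Disjoint (V i) (V j)) ∧ (∀ v : Fin N, ∃ i, v ∈ V i) ∧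
          (∀ i : Fin h, ∀ u ∈ V i, ∀ v ∈ V i, ¬ R.Adj u v)) ∧
        -- (2) the number of vertices is at least (1/δ)^(β log(1/δ))
        ((1 / δ) ^ (β * Real.log (1 / δ)) ≤ (N : ℝ)) ∧
        -- (3) E(R) is the union of at least δ|V(R)|² pairwise edge-disjoint h-cliques
        (∃ 𝓚 : Finset (Finset (Fin N)),
          δ * (N : ℝ) ^ 2 ≤ (𝓚.card : ℝ) ∧
          (∀ K ∈ 𝓚, R.IsNClique h K) ∧
          (∀ K ∈ 𝓚, ∀ K' ∈ 𝓚, K ≠ K' → (K ∩ K').card ≤ 1) ∧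
          (∀ u v : Fin N, R.Adj u v → ∃ K ∈ 𝓚, u ∈ K ∧ v ∈ K)) ∧
        -- (4) for every 3 ≤ t ≤ h and increasing index sequence, at most N² cycles
        (∀ t : ℕ, ∀ ht3 : 3 ≤ t, t ≤ h → ∀ idx : Fin t → Fin h, StrictMono idx →
          (Set.ncard {v : Fin t → Fin N | Function.Injective v ∧
            (∀ j : Fin t, v j ∈ V (idx j)) ∧
            (∀ j : Fin t, R.Adj (v j) (v ⟨(j.1 + 1) % t, Nat.mod_lt _ (by omega)⟩))} : ℝ)
            ≤ (N : ℝ) ^ 2) := by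
  have hh₀ : (1 : ℝ) < h := by exact_mod_cast (by lia : 1 < h)
  refine ⟨(1 / h) ^ 10, 1 / (100 * Real.log h), by positivity,
    by have := Real.log_pos hh₀; positivity, fun δ hδ hδ₀ => ?_⟩
  obtain ⟨G, _, _, S, hS, hG, hSG⟩ := exists_dense_isAverageFree (by lia : 2 ≤ h) hδ hδ₀.le
  let e : Fin (Fintype.card (Fin h × G)) ≃ Fin h × G := (Fintype.equivFin _).symm
  have hN : (Fintype.card (Fin h × G) : ℝ) = h * Fintype.card G := by simp
  refine ⟨_, progressionGraph e S, part e, ⟨fun i j hij => ?_, fun v => ⟨_, mem_part.2 rfl⟩,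
    fun i u hu v hv => ?_⟩, ?_, ⟨progressions e S, ?_, fun K hK => ?_, fun K hK K' hK' =>
    card_inter_le_one_of_mem_progressions hS hK hK', fun u v => exists_mem_progressions_of_adj⟩,
    fun t ht _ idx hidx => ?_⟩
  · exact Finset.disjoint_left.2 fun v hi hj => hij ((mem_part.1 hi).symm.trans (mem_part.1 hj))
  · exact not_progressionGraph_adj_of_fst_eq ((mem_part.1 hu).trans (mem_part.1 hv).symm)
  · rw [hN]
    exact hG.trans (le_mul_of_one_le_left (by positivity) hh₀.le)
  · rw [hN, card_progressions e hS (by lia), Nat.cast_mul]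
    calc δ * ((h : ℝ) * (Fintype.card G : ℝ)) ^ 2
        = (Fintype.card G : ℝ) * (δ * (h : ℝ) ^ 2 * (Fintype.card G : ℝ)) := by ring
      _ ≤ (Fintype.card G : ℝ) * (S.card : ℝ) := by gcongr
  · obtain ⟨z, s, hs, rfl⟩ := mem_progressions.1 hK
    exact progressionGraph_isNClique e z hs
  · exact_mod_cast (ncard_cycles_le e hS (by lia) hidx).trans_eq (by rw [Fintype.card_fin])

end
end

section
/- Let M be the complement of the graph on vertex set {1,2,3,4,5,6,7} whose only edges are {1,2}, {3,4}, {5,6}. Let G be a graph with a vertex partition V(G) = X₁ ∪ … ∪ X₈ such that X₁, X₃, X₅, X₇ are cliques, X₂, X₄, X₆, X₈ are independent sets, and there are no edges between X_i and X_j unless |i − j| ≡ ±1 (mod 8). Then: (1) every induced copy of the 8-cycle C₈ in G has exactly one vertex in each part X_i, and its vertices can be written as x₁x₂…x₈x₁ with x_i ∈ X_i; (2) G contains no induced copy of M. -/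
open scoped Classical
open Finset

noncomputable section

/-- The graph `M`: the complement of the graph on `{1,…,7}` (here `Fin 7`) whose only edges
are `{1,2}, {3,4}, {5,6}`. -/
def Mgraph : SimpleGraph (Fin 7) :=
  (SimpleGraph.fromEdgeSet {s((0 : Fin 7), 1), s(2, 3), s(4, 5)})ᶜ

/-!
The union `A` of the clique parts induces a disjoint union of cliques, and the rest is independent.
A vertex of `A` has a neighbourhood which is a clique plus an independent set, a vertex outside `A`
has one which is a disjoint union of cliques; neither contains an induced 4-cycle, whereas the
vertex of `M` adjacent to all others has an induced octahedron as its neighbourhood.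

For an induced cycle of length at least 7, label each vertex by its part. The two neighbours of
a vertex in an independent part lie in different, hence in both, adjacent clique parts. If two
vertices shared an independent part, the routes between them through the two adjacent
clique parts would close up to a cycle of length at most 6, so no independent part is met twice.
Leaving a clique part at both ends of its at most two vertices, the cycle therefore enters
both adjacent independent parts. So the set of parts met is closed under adjacency, hence is
everything, and when the cycle is as long as the cycle of parts the labelling is an automorphism.
-/

theorem surjOn_of_injOn_of_encard_le_two {α β : Type*} {s : Set α} {t : Set β} {g : α → β}
    (ht : t.encard ≤ 2) (hs : s.Nontrivial) (hmaps : Set.MapsTo g s t) (hinj : Set.InjOn g s) :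
    Set.SurjOn g s t := by
  have hfin : t.Finite := Set.finite_of_encard_le_coe (k := 2) ht
  have himage : g '' s = t := by
    refine (hfin.subset hmaps.image_subset).eq_of_subset_of_encard_le hmaps.image_subset ?_
    rw [hinj.encard_image]
    exact ht.trans (Order.add_one_le_of_lt (Set.one_lt_encard_iff_nontrivial.2 hs))
  exact himage.superset

section CyclesAndGirth

open SimpleGraph

variable {W : Type*} {H : SimpleGraph W}

theorem eq_univ_of_adj_closed (hconn : H.Preconnected) {s : Set W} (hne : s.Nonempty)
    (hs : ∀ v ∈ s, ∀ w, H.Adj v w → w ∈ s) : s = Set.univ := by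
  obtain ⟨v, hv⟩ := hne
  refine Set.eq_univ_of_forall fun w => ?_
  obtain ⟨p⟩ := hconn v w
  induction p with
  | nil => exact hv
  | cons hadj _ ih => exact ih (hs _ hv _ hadj)

theorem isHamiltonianCycle_of_isCycle [DecidableEq W] (hconn : H.Preconnected)
    (hdeg : ∀ v, (H.neighborSet v).encard ≤ 2) {u : W} {p : H.Walk u u} (hp : p.IsCycle) :
    p.IsHamiltonianCycle := by
  have support_closed : ∀ v ∈ {v | v ∈ p.support}, ∀ w, H.Adj v w → w ∈ {v | v ∈ p.support} := by
    intro v hv w hvw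
    have hsub := p.toSubgraph.neighborSet_subset v
    have hfin : (H.neighborSet v).Finite := Set.finite_of_encard_le_coe (k := 2) (hdeg v)
    have heq : p.toSubgraph.neighborSet v = H.neighborSet v := by
      refine (hfin.subset hsub).eq_of_subset_of_encard_le hsub ?_
      rw [← (hfin.subset hsub).cast_ncard_eq, hp.ncard_neighborSet_toSubgraph_eq_two hv]
      exact hdeg v
    have hw : p.toSubgraph.Adj v w := heq.symm.subset hvw
    exact (Walk.mem_verts_toSubgraph p).1 hw.snd_mem
  have hall := eq_univ_of_adj_closed hconn ⟨u, p.start_mem_support⟩ support_closed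
  refine ⟨hp, hp.isPath_tail.isHamiltonian_of_mem fun w => ?_⟩
  rw [p.support_tail_of_not_nil hp.not_nil]
  rcases p.mem_support_iff.1 (hall.superset (Set.mem_univ w)) with rfl | hw
  · exact p.end_mem_tail_support hp.not_nil
  · exact hw

theorem card_le_egirth [Fintype W] (hconn : H.Preconnected)
    (hdeg : ∀ v, (H.neighborSet v).encard ≤ 2) : (Fintype.card W : ℕ∞) ≤ H.egirth :=
  le_egirth.2 fun _ _ hp => by
    rw [(isHamiltonianCycle_of_isCycle hconn hdeg hp).length_eq]

theorem not_adj_of_adj_of_adj (hgirth : 4 ≤ H.egirth) {a b c : W} (hab : H.Adj a b)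
    (hbc : H.Adj b c) : ¬ H.Adj a c := by
  intro hac
  have hcycle : (Walk.cons hab (.cons hbc (.cons hac.symm .nil))).IsCycle := by
    simp [Walk.cons_isCycle_iff, hab.ne, hbc.ne, hac.ne, hab.ne', hac.ne']
  have := hgirth.trans (egirth_le_length hcycle)
  norm_num at this

theorem isAcyclic_of_encard_edgeSet_lt_egirth {U : SimpleGraph W} (hle : U ≤ H)
    (hcard : U.edgeSet.encard < H.egirth) : U.IsAcyclic := by
  intro a r hr
  have hsub : (r.edges.toFinset : Set (Sym2 W)) ⊆ U.edgeSet := fun e he =>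
    r.edges_subset_edgeSet (List.mem_toFinset.1 he)
  have hlen : (r.length : ℕ∞) ≤ U.edgeSet.encard := by
    rw [← r.length_edges, ← List.toFinset_card_of_nodup hr.edges_nodup,
      ← Set.encard_coe_eq_coe_finsetCard]
    exact Set.encard_le_encard hsub
  have hgirth := egirth_le_length (hr.mapLe hle)
  rw [Walk.length_map] at hgirth
  exact (hlen.trans_lt hcard).not_ge hgirth

theorem eq_of_isPath_of_length_add_lt_egirth {u v : W} {p q : H.Walk u v} (hp : p.IsPath)
    (hq : q.IsPath) (hlen : (p.length + q.length : ℕ∞) < H.egirth) : p = q := by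
  set U := fromEdgeSet {e | e ∈ p.edges ∨ e ∈ q.edges} with hU
  have hsub : {e | e ∈ p.edges ∨ e ∈ q.edges} ⊆ H.edgeSet := fun e he =>
    he.elim (p.edges_subset_edgeSet ·) (q.edges_subset_edgeSet ·)
  have hedges : U.edgeSet = {e | e ∈ p.edges ∨ e ∈ q.edges} := by
    rw [hU, edgeSet_fromEdgeSet, sdiff_eq_left, Set.disjoint_left]
    exact fun e he => H.not_isDiag_of_mem_edgeSet (hsub he)
  have hcard : U.edgeSet.encard ≤ p.length + q.length := by
    have hfinset : U.edgeSet = (p.edges ++ q.edges).toFinset := by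
      ext
      simp [hedges]
    rw [hfinset, Set.encard_coe_eq_coe_finsetCard, ← p.length_edges, ← q.length_edges]
    exact_mod_cast (List.toFinset_card_le _).trans_eq List.length_append
  have hle : U ≤ H := edgeSet_subset_edgeSet.1 (hedges ▸ hsub)
  have hacyclic := isAcyclic_of_encard_edgeSet_lt_egirth hle (hcard.trans_lt hlen)
  have hpU : ∀ e ∈ p.edges, e ∈ U.edgeSet := fun e he => hedges ▸ Or.inl he
  have hqU : ∀ e ∈ q.edges, e ∈ U.edgeSet := fun e he => hedges ▸ Or.inr he
  have htransfer : p.transfer U hpU = q.transfer U hqU := congrArg Subtype.val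
    ((hacyclic.subsingleton_path u v).elim ⟨_, hp.transfer hpU⟩ ⟨_, hq.transfer hqU⟩)
  apply Walk.ext_support
  simpa only [Walk.support_transfer] using congrArg Walk.support htransfer

end CyclesAndGirth

/-- `c` colours `G` by the vertices of a pattern graph `P`: the colour classes are cliques for
colours in `K` and independent sets otherwise, and an edge between distinct classes lies over an
edge of `P`. In terms of a vertex partition, `c` names the part containing a given vertex. -/
structure IsCliqueIndepColoring {V I : Type*} (G : SimpleGraph V) (P : SimpleGraph I) (K : Set I)
    (c : V → I) : Prop where
  adj_of_mem ⦃u v : V⦄ : u ≠ v → c u = c v → c u ∈ K → G.Adj u v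
  not_adj_of_notMem ⦃u v : V⦄ : c u = c v → c u ∉ K → ¬ G.Adj u v
  adj_color ⦃u v : V⦄ : G.Adj u v → c u ≠ c v → P.Adj (c u) (c v)

namespace IsCliqueIndepColoring

open SimpleGraph

variable {V W I : Type*} {G : SimpleGraph V} {H : SimpleGraph W} {P : SimpleGraph I} {K : Set I}

theorem of_parts {X : I → Set V} {c : V → I} (hX : ∀ v i, v ∈ X i ↔ c v = i)
    (hclique : ∀ i ∈ K, G.IsClique (X i)) (hindep : ∀ i ∉ K, G.IsIndepSet (X i))
    (hcross : ∀ i j, i ≠ j → ∀ u ∈ X i, ∀ v ∈ X j, G.Adj u v → P.Adj i j) :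
    IsCliqueIndepColoring G P K c where
  adj_of_mem _ _ hne heq hK := hclique _ hK ((hX _ _).2 rfl) ((hX _ _).2 heq.symm) hne
  not_adj_of_notMem _ _ heq hK hadj :=
    hindep _ hK ((hX _ _).2 rfl) ((hX _ _).2 heq.symm) hadj.ne hadj
  adj_color _ _ hadj hne := hcross _ _ hne _ ((hX _ _).2 rfl) _ ((hX _ _).2 rfl) hadj

theorem comp_embedding {c : V → I} (hc : IsCliqueIndepColoring G P K c) (f : H ↪g G) :
    IsCliqueIndepColoring H P K (c ∘ f) where
  adj_of_mem _ _ hne heq hK := f.map_adj_iff.1 (hc.adj_of_mem (f.injective.ne hne) heq hK)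
  not_adj_of_notMem _ _ heq hK hadj := hc.not_adj_of_notMem heq hK (f.map_adj_iff.2 hadj)
  adj_color _ _ hadj hne := hc.adj_color (f.map_adj_iff.2 hadj) hne

section Neighborhoods

variable {c : V → I} {u v : V}

theorem adj_color_of_notMem (hc : IsCliqueIndepColoring G P K c) (hadj : G.Adj u v)
    (hu : c u ∉ K) : P.Adj (c u) (c v) :=
  hc.adj_color hadj fun heq => hc.not_adj_of_notMem heq hu hadj

theorem color_mem_of_adj (hc : IsCliqueIndepColoring G P K c) (hbip : P.IsBipartiteWith K Kᶜ)
    (hadj : G.Adj u v) (hu : c u ∉ K) : c v ∈ K :=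
  hbip.symm.mem_of_mem_adj hu (hc.adj_color_of_notMem hadj hu)

theorem color_eq_of_adj (hc : IsCliqueIndepColoring G P K c) (hbip : P.IsBipartiteWith K Kᶜ)
    (hadj : G.Adj u v) (hu : c u ∈ K) (hv : c v ∈ K) : c u = c v := by
  by_contra hne
  exact hbip.mem_of_mem_adj hu (hc.adj_color hadj hne) hv

theorem adj_or_adj_of_common_neighbor (hc : IsCliqueIndepColoring G P K c)
    (hbip : P.IsBipartiteWith K Kᶜ) {z a b a' b' : V} (hza : G.Adj z a) (hzb : G.Adj z b)
    (hza' : G.Adj z a') (hzb' : G.Adj z b') (hab : a ≠ b) (hab' : a' ≠ b')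
    (hcross : ∀ x ∈ ({a, b} : Set V), ∀ y ∈ ({a', b'} : Set V), G.Adj x y) :
    G.Adj a b ∨ G.Adj a' b' := by
  by_contra! hnot
  by_cases hz : c z ∈ K
  · have notMem_of_not_adj {x y : V} (hzx : G.Adj z x) (hzy : G.Adj z y) (hxy : x ≠ y)
        (hnadj : ¬ G.Adj x y) : ∃ w ∈ ({x, y} : Set V), c w ∉ K := by
      by_contra! hK
      have hx := hc.color_eq_of_adj hbip hzx hz (hK x (by simp))
      have hy := hc.color_eq_of_adj hbip hzy hz (hK y (by simp))
      exact hnadj (hc.adj_of_mem hxy (hx.symm.trans hy) (hx ▸ hz))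
    obtain ⟨x, hx, hxK⟩ := notMem_of_not_adj hza hzb hab hnot.1
    obtain ⟨y, hy, hyK⟩ := notMem_of_not_adj hza' hzb' hab' hnot.2
    exact hyK (hc.color_mem_of_adj hbip (hcross x hx y hy) hxK)
  · have haK := hc.color_mem_of_adj hbip hza hz
    have hbK := hc.color_mem_of_adj hbip hzb hz
    have haK' := hc.color_mem_of_adj hbip hza' hz
    have hac := hc.color_eq_of_adj hbip (hcross a (by simp) a' (by simp)) haK haK'
    have hbc := hc.color_eq_of_adj hbip (hcross b (by simp) a' (by simp)) hbK haK'
    exact hnot.1 (hc.adj_of_mem hab (hac.trans hbc.symm) haK)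

theorem isEmpty_Mgraph_embedding (hc : IsCliqueIndepColoring G P K c)
    (hbip : P.IsBipartiteWith K Kᶜ) : IsEmpty (Mgraph ↪g G) := by
  refine ⟨fun f => ?_⟩
  have hM : Mgraph.Adj 0 1 ∨ Mgraph.Adj 2 3 :=
    (hc.comp_embedding f).adj_or_adj_of_common_neighbor hbip (z := 6)
      (by simp [Mgraph]) (by simp [Mgraph]) (by simp [Mgraph]) (by simp [Mgraph])
      (by decide) (by decide) (by simp [Mgraph])
  simp [Mgraph] at hM

end Neighborhoods

section LargeGirth

variable {c : W → I}

theorem exists_isPath_of_color_eq (hc : IsCliqueIndepColoring H P K c) {u v x y : W}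
    (huv : u ≠ v) (hcuv : c u = c v) (hux : H.Adj u x) (hvy : H.Adj v y) (hxy : c x = c y)
    (hx : c x ∈ K) (hu : c u ∉ K) :
    ∃ p : H.Walk u v, p.IsPath ∧ p.length ≤ 3 ∧ p.snd = x := by
  have hne {s t : W} (hs : c s ∉ K) (ht : c t ∈ K) : s ≠ t := fun h => hs (h ▸ ht)
  by_cases heq : x = y
  · subst heq
    exact ⟨.cons hux (.cons hvy.symm .nil),
      by simp [Walk.cons_isPath_iff, huv, hux.ne, hvy.ne'], by simp, by simp⟩
  · have huy : u ≠ y := hne hu (hxy ▸ hx)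
    have hvx : v ≠ x := hne (hcuv ▸ hu) hx
    exact ⟨.cons hux (.cons (hc.adj_of_mem heq hxy hx) (.cons hvy.symm .nil)),
      by simp [Walk.cons_isPath_iff, huv, hux.ne, hvy.ne', heq, huy, hvx.symm], by simp, by simp⟩

theorem injOn_neighborSet (hc : IsCliqueIndepColoring H P K c) (hbip : P.IsBipartiteWith K Kᶜ)
    (hgirth : 4 ≤ H.egirth) {v : W} (hv : c v ∉ K) : Set.InjOn c (H.neighborSet v) := by
  intro x hx y hy heq
  by_contra hne
  have hxy : H.Adj x y := hc.adj_of_mem hne heq (hc.color_mem_of_adj hbip hx hv)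
  exact not_adj_of_adj_of_adj hgirth hx hxy hy

theorem surjOn_neighborSet (hc : IsCliqueIndepColoring H P K c) (hbip : P.IsBipartiteWith K Kᶜ)
    (hP : ∀ i, (P.neighborSet i).encard ≤ 2) (hH : ∀ v, (H.neighborSet v).Nontrivial)
    (hgirth : 4 ≤ H.egirth) {v : W} (hv : c v ∉ K) :
    Set.SurjOn c (H.neighborSet v) (P.neighborSet (c v)) :=
  surjOn_of_injOn_of_encard_le_two (hP _) (hH v) (fun _ hx => hc.adj_color_of_notMem hx hv)
    (hc.injOn_neighborSet hbip hgirth hv)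

theorem injOn_preimage_compl (hc : IsCliqueIndepColoring H P K c) (hbip : P.IsBipartiteWith K Kᶜ)
    (hP : ∀ i, (P.neighborSet i).encard ≤ 2) (hH : ∀ v, (H.neighborSet v).Nontrivial)
    (hgirth : 7 ≤ H.egirth) : Set.InjOn c (c ⁻¹' Kᶜ) := by
  intro u hu v hv huv
  by_contra hne
  have hgirth' : 4 ≤ H.egirth := le_trans (by norm_num) hgirth
  have exists_path_through {x : W} (hux : H.Adj u x) :
      ∃ p : H.Walk u v, p.IsPath ∧ p.length ≤ 3 ∧ p.snd = x := by
    obtain ⟨y, hvy, hyx⟩ := hc.surjOn_neighborSet hbip hP hH hgirth' hv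
      (show c x ∈ P.neighborSet (c v) from huv ▸ hc.adj_color_of_notMem hux hu)
    exact hc.exists_isPath_of_color_eq hne huv hux hvy hyx.symm (hc.color_mem_of_adj hbip hux hu) hu
  obtain ⟨x, hux, y, huy, hxy⟩ := hH u
  obtain ⟨p, hp, hplen, rfl⟩ := exists_path_through hux
  obtain ⟨q, hq, hqlen, rfl⟩ := exists_path_through huy
  have hlen : (p.length + q.length : ℕ∞) < H.egirth :=
    lt_of_lt_of_le (by exact_mod_cast (by lia : p.length + q.length < 7)) hgirth
  exact hxy (congrArg Walk.snd (eq_of_isPath_of_length_add_lt_egirth hp hq hlen))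

theorem exists_ne_adj_color_of_mem (hc : IsCliqueIndepColoring H P K c)
    (hH : ∀ v, (H.neighborSet v).Nontrivial) (hgirth : 4 ≤ H.egirth) {v : W} (hv : c v ∈ K) :
    ∃ x y, x ≠ y ∧ P.Adj (c v) (c x) ∧ P.Adj (c v) (c y) := by
  have color_eq {s t : W} (hst : H.Adj s t) (hs : c s = c v) (hnot : ¬ P.Adj (c v) (c t)) :
      c t = c v := by
    by_contra hne
    exact hnot (hs ▸ hc.adj_color hst (hs ▸ Ne.symm hne))
  have adj_or_adj {y x z : W} (hy : c y = c v) (hyx : H.Adj y x) (hyz : H.Adj y z) (hxz : x ≠ z) :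
      P.Adj (c v) (c x) ∨ P.Adj (c v) (c z) := by
    by_contra! hnot
    have hx := color_eq hyx hy hnot.1
    have hz := color_eq hyz hy hnot.2
    exact not_adj_of_adj_of_adj hgirth hyx
      (hc.adj_of_mem hxz (hx.trans hz.symm) (hx ▸ hv)) hyz
  have exists_exit {x y : W} (hvx : H.Adj v x) (hvy : H.Adj v y) (hxy : x ≠ y) :
      ∃ z, x ≠ z ∧ P.Adj (c v) (c z) := by
    by_cases hy : P.Adj (c v) (c y)
    · exact ⟨y, hxy, hy⟩
    obtain ⟨z, hyz, hzv⟩ := (hH y).exists_ne v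
    have hz := (adj_or_adj (color_eq hvy rfl hy) hvy.symm hyz hzv.symm).resolve_left P.irrefl
    exact ⟨z, fun h => not_adj_of_adj_of_adj hgirth hvy (h ▸ hyz) hvx, hz⟩
  obtain ⟨x, hvx, y, hvy, hxy⟩ := hH v
  rcases adj_or_adj rfl hvx hvy hxy with hx | hy
  · obtain ⟨z, hxz, hz⟩ := exists_exit hvx hvy hxy
    exact ⟨x, z, hxz, hx, hz⟩
  · obtain ⟨z, hyz, hz⟩ := exists_exit hvy hvx hxy.symm
    exact ⟨y, z, hyz, hy, hz⟩

theorem mem_range_of_adj_color (hc : IsCliqueIndepColoring H P K c)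
    (hbip : P.IsBipartiteWith K Kᶜ) (hP : ∀ i, (P.neighborSet i).encard ≤ 2)
    (hH : ∀ v, (H.neighborSet v).Nontrivial) (hgirth : 7 ≤ H.egirth) (v : W) {j : I}
    (hj : P.Adj (c v) j) : j ∈ Set.range c := by
  have hgirth' : 4 ≤ H.egirth := le_trans (by norm_num) hgirth
  by_cases hv : c v ∈ K
  · obtain ⟨x, y, hne, hx, hy⟩ := hc.exists_ne_adj_color_of_mem hH hgirth' hv
    have hinj : Set.InjOn c {x, y} := (hc.injOn_preimage_compl hbip hP hH hgirth).mono <|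
      Set.pair_subset (hbip.mem_of_mem_adj hv hx) (hbip.mem_of_mem_adj hv hy)
    have hsurj : Set.SurjOn c {x, y} (P.neighborSet (c v)) :=
      surjOn_of_injOn_of_encard_le_two (hP _) (Set.nontrivial_pair hne)
        (by simp [Set.MapsTo, hx, hy]) hinj
    exact Set.image_subset_range _ _ (hsurj hj)
  · exact Set.image_subset_range _ _ (hc.surjOn_neighborSet hbip hP hH hgirth' hv hj)

theorem surjective [Nonempty W] (hc : IsCliqueIndepColoring H P K c)
    (hbip : P.IsBipartiteWith K Kᶜ) (hconn : P.Preconnected)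
    (hP : ∀ i, (P.neighborSet i).encard ≤ 2) (hH : ∀ v, (H.neighborSet v).Nontrivial)
    (hgirth : 7 ≤ H.egirth) : Function.Surjective c :=
  Set.range_eq_univ.1 <| eq_univ_of_adj_closed hconn (Set.range_nonempty c) <|
    Set.forall_mem_range.2 fun v _ hj => hc.mem_range_of_adj_color hbip hP hH hgirth v hj

theorem adj_iff_of_injective (hc : IsCliqueIndepColoring H P K c) (hinj : Function.Injective c)
    (hP : ∀ i, (P.neighborSet i).encard ≤ 2) (hH : ∀ v, (H.neighborSet v).Nontrivial) (v w : W) :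
    P.Adj (c v) (c w) ↔ H.Adj v w := by
  have hmaps : Set.MapsTo c (H.neighborSet v) (P.neighborSet (c v)) := fun _ hx =>
    hc.adj_color hx (hinj.ne hx.ne)
  refine ⟨fun hadj => ?_, fun hadj => hmaps hadj⟩
  obtain ⟨x, hvx, hxw⟩ :=
    surjOn_of_injOn_of_encard_le_two (hP _) (hH v) hmaps hinj.injOn hadj
  exact hinj hxw ▸ hvx

theorem exists_iso [Finite I] {c : I → I} (hc : IsCliqueIndepColoring P P K c)
    (hbip : P.IsBipartiteWith K Kᶜ) (hconn : P.Connected)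
    (hdeg : ∀ i, (P.neighborSet i).encard = 2) (hgirth : 7 ≤ P.egirth) :
    ∃ e : P ≃g P, ⇑e = c := by
  have := hconn.nonempty
  have hle : ∀ i, (P.neighborSet i).encard ≤ 2 := fun i => (hdeg i).le
  have hnontrivial : ∀ i, (P.neighborSet i).Nontrivial := fun i =>
    Set.one_lt_encard_iff_nontrivial.1 (by simp [hdeg])
  have hsurj := hc.surjective hbip hconn.preconnected hle hnontrivial hgirth
  have hinj := Finite.injective_iff_surjective.2 hsurj
  exact ⟨⟨.ofBijective c ⟨hinj, hsurj⟩, hc.adj_iff_of_injective hinj hle hnontrivial _ _⟩, rfl⟩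

end LargeGirth

end IsCliqueIndepColoring

section CycleGraph

open SimpleGraph

variable {n : ℕ}

theorem cycleGraph_adj_iff [NeZero n] (hn : 2 ≤ n) {i j : Fin n} :
    (cycleGraph n).Adj i j ↔ j = i + 1 ∨ i = j + 1 := by
  obtain ⟨m, rfl⟩ := Nat.exists_eq_add_of_le' hn
  rw [cycleGraph_adj, sub_eq_iff_eq_add', sub_eq_iff_eq_add', or_comm]

theorem encard_neighborSet_cycleGraph (hn : 3 ≤ n) (i : Fin n) :
    ((cycleGraph n).neighborSet i).encard = 2 := by
  obtain ⟨m, rfl⟩ := Nat.exists_eq_add_of_le' hn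
  rw [← coe_neighborFinset, Set.encard_coe_eq_coe_finsetCard, card_neighborFinset_eq_degree,
    cycleGraph_degree_three_le, Nat.cast_ofNat]

theorem le_egirth_cycleGraph (hn : 3 ≤ n) : (n : ℕ∞) ≤ (cycleGraph n).egirth := by
  simpa using card_le_egirth cycleGraph_preconnected
    fun i => (encard_neighborSet_cycleGraph hn i).le

theorem isBipartiteWith_cycleGraph (hn : Even n) :
    (cycleGraph n).IsBipartiteWith {i | i.1 % 2 = 0} {i | i.1 % 2 = 0}ᶜ where
  disjoint := disjoint_compl_right
  mem_of_adj i j hadj := by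
    have hvalid := (cycleGraph.bicoloring_of_even n hn).valid hadj
    simp only [cycleGraph.bicoloring_of_even, Coloring.mk, RelHom.coeFn_mk, ne_eq,
      decide_eq_decide] at hvalid
    simp only [Set.mem_compl_iff, Set.mem_ofPred_eq]
    tauto

end CycleGraph

theorem induced_C8_structure_and_M_free_general {V : Type*} {n : ℕ} [NeZero n] (hn : 8 ≤ n)
    (heven : Even n) (G : SimpleGraph V) (X : Fin n → Set V)
    (hdisj : ∀ i j : Fin n, i ≠ j → Disjoint (X i) (X j))
    (hcover : ∀ v : V, ∃ i, v ∈ X i)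
    (hclique : ∀ i : Fin n, i.1 % 2 = 0 → ∀ u ∈ X i, ∀ v ∈ X i, u ≠ v → G.Adj u v)
    (hindep : ∀ i : Fin n, i.1 % 2 = 1 → ∀ u ∈ X i, ∀ v ∈ X i, ¬ G.Adj u v)
    (hcross : ∀ i j : Fin n, i ≠ j → ∀ u ∈ X i, ∀ v ∈ X j, G.Adj u v →
      (j = i + 1 ∨ i = j + 1)) :
    (∀ f : SimpleGraph.cycleGraph n ↪g G,
      (∀ i : Fin n, ∃! v : V, v ∈ Set.range f ∧ v ∈ X i) ∧
      (∃ x : Fin n → V, Set.range x = Set.range f ∧ (∀ i : Fin n, x i ∈ X i) ∧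
        ∀ i : Fin n, G.Adj (x i) (x (i + 1)))) ∧
    IsEmpty (Mgraph ↪g G) := by
  choose c hcX using hcover
  have mem_part_iff {v : V} {i : Fin n} : v ∈ X i ↔ c v = i :=
    ⟨fun hv => by_contra fun hne => Set.disjoint_left.1 (hdisj _ _ hne) (hcX v) hv,
      fun h => h ▸ hcX v⟩
  have hadj {i j : Fin n} : (SimpleGraph.cycleGraph n).Adj i j ↔ j = i + 1 ∨ i = j + 1 :=
    cycleGraph_adj_iff (by lia)
  have hbip := isBipartiteWith_cycleGraph heven
  have hc : IsCliqueIndepColoring G (SimpleGraph.cycleGraph n) {i | i.1 % 2 = 0} c := .of_parts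
    (fun _ _ => mem_part_iff) hclique
    (fun i hi u hu v hv _ => hindep i (Nat.mod_two_ne_zero.1 hi) u hu v hv)
    (fun i j hij u hu v hv huv => hadj.2 (hcross i j hij u hu v hv huv))
  refine ⟨fun f => ?_, hc.isEmpty_Mgraph_embedding hbip⟩
  obtain ⟨e, he⟩ := (hc.comp_embedding f).exists_iso hbip ⟨SimpleGraph.cycleGraph_preconnected⟩
    (encard_neighborSet_cycleGraph (by lia))
    (le_trans (by exact_mod_cast (by lia : 7 ≤ n)) (le_egirth_cycleGraph (by lia)))
  have mem_part_iff_symm {v i : Fin n} : f v ∈ X i ↔ v = e.symm i := by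
    rw [mem_part_iff, ← Function.comp_apply (f := c), ← he]
    exact e.toEquiv.eq_symm_apply.symm
  refine ⟨fun i => ⟨f (e.symm i), ⟨Set.mem_range_self _, mem_part_iff_symm.2 rfl⟩, ?_⟩,
    f ∘ e.symm, e.symm.surjective.range_comp f, fun _ => mem_part_iff_symm.2 rfl,
    fun _ => f.map_adj_iff.2 (e.symm.map_adj_iff.2 (hadj.2 (.inl rfl)))⟩
  rintro _ ⟨⟨v, rfl⟩, hv⟩
  rw [mem_part_iff_symm.1 hv]

/-- Lemma 3.4 of the paper. `X i` here is the part `X_{i+1}` of the paper,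
so the cliques `X₁, X₃, X₅, X₇` are the parts with even index `i : Fin 8`. -/
theorem induced_C8_structure_and_M_free {V : Type*} (G : SimpleGraph V)
    (X : Fin 8 → Set V)
    (hdisj : ∀ i j : Fin 8, i ≠ j → Disjoint (X i) (X j))
    (hcover : ∀ v : V, ∃ i, v ∈ X i)
    (hclique : ∀ i : Fin 8, i.1 % 2 = 0 → ∀ u ∈ X i, ∀ v ∈ X i, u ≠ v → G.Adj u v)
    (hindep : ∀ i : Fin 8, i.1 % 2 = 1 → ∀ u ∈ X i, ∀ v ∈ X i, ¬ G.Adj u v)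
    (hcross : ∀ i j : Fin 8, i ≠ j → ∀ u ∈ X i, ∀ v ∈ X j, G.Adj u v →
      (j = i + 1 ∨ i = j + 1)) :
    (∀ f : SimpleGraph.cycleGraph 8 ↪g G,
      (∀ i : Fin 8, ∃! v : V, v ∈ Set.range f ∧ v ∈ X i) ∧
      (∃ x : Fin 8 → V, Set.range x = Set.range f ∧ (∀ i : Fin 8, x i ∈ X i) ∧
        ∀ i : Fin 8, G.Adj (x i) (x (i + 1)))) ∧
    IsEmpty (Mgraph ↪g G) := by
  exact induced_C8_structure_and_M_free_general le_rfl (by decide) G X hdisj hcover hclique hindep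
    hcross

end
end
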